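/- Let (x₀,y₀) be a positive fixed point of the quartic operator Q (so x₀>0, y₀>0 and Q(x₀,y₀)=(x₀,y₀)). Then ξ₀ = y₀/x₀ is a root of the quintic polynomial P₅, i.e. μ₀ξ₀⁵ + μ₁ξ₀⁴ + μ₂ξ₀³ + μ₃ξ₀² + μ₄ξ₀ − μ₅ = 0. -/

import Mathlib

theorem stmt_0 (a₀ a₁ a₂ a₃ a₄ b₀ b₁ b₂ b₃ b₄ : ℝ)
    (ha₀ : 0 < a₀) (ha₁ : 0 < a₁) (ha₂ : 0 < a₂) (ha₃ : 0 < a₃) (ha₄ : 0 < a₄)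
    (hb₀ : 0 < b₀) (hb₁ : 0 < b₁) (hb₂ : 0 < b₂) (hb₃ : 0 < b₃) (hb₄ : 0 < b₄)
    (Q : ℝ × ℝ → ℝ × ℝ)
    (hQ : ∀ x y : ℝ, Q (x, y) =
      (a₀ * x ^ 4 + 4 * a₁ * x ^ 3 * y + 6 * a₂ * x ^ 2 * y ^ 2 + 4 * a₃ * x * y ^ 3 + a₄ * y ^ 4,
       b₀ * x ^ 4 + 4 * b₁ * x ^ 3 * y + 6 * b₂ * x ^ 2 * y ^ 2 + 4 * b₃ * x * y ^ 3 + b₄ * y ^ 4))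
    (x₀ y₀ : ℝ) (hx₀ : 0 < x₀) (hy₀ : 0 < y₀) (hfix : Q (x₀, y₀) = (x₀, y₀)) :
    a₄ * (y₀ / x₀) ^ 5 + (4 * a₃ - b₄) * (y₀ / x₀) ^ 4 + (6 * a₂ - 4 * b₃) * (y₀ / x₀) ^ 3
      + (4 * a₁ - 6 * b₂) * (y₀ / x₀) ^ 2 + (a₀ - 4 * b₁) * (y₀ / x₀) - b₀ = 0 := by
  rw [hQ, Prod.mk.injEq] at hfix
  obtain ⟨h1, h2⟩ := hfix
  have hx : x₀ ≠ 0 := hx₀.ne'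
  obtain ⟨t, ht⟩ : ∃ t, t = y₀ / x₀ := ⟨_, rfl⟩
  have hy : y₀ = t * x₀ := by rw [ht]; field_simp
  rw [← ht]
  have hx5 : x₀ ^ 5 ≠ 0 := pow_ne_zero 5 hx
  apply mul_left_cancel₀ hx5
  subst hy
  linear_combination (t * x₀) * h1 - x₀ * h2
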